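/- Any finite simplicial complex K that is homotopy equivalent to a k-dimensional sphere has at least k+2 maximal (principal) faces. -/

import Mathlib

/-- A (finite) simplicial complex is represented as a finite set of faces
(finite sets of natural-number vertices). -/
abbrev Cx : Type := Finset (Finset ℕ)

/-- `K` is a simplicial complex: closed under taking subsets of faces. -/
def IsComplex (K : Cx) : Prop := ∀ σ ∈ K, ∀ τ ⊆ σ, τ ∈ K

/-- Vertex set of a complex. -/
def verts (K : Cx) : Finset ℕ := K.sup id

/-- The full simplex on a vertex set `V` (all subsets). -/
def simplexOn (V : Finset ℕ) : Cx := V.powerset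

/-- The boundary of the simplex on `V` (all proper subsets). -/
def boundaryOn (V : Finset ℕ) : Cx := V.powerset.erase V

/-- Alexander dual of `K` relative to a ground vertex set `V`. -/
def dual (K : Cx) (V : Finset ℕ) : Cx := V.powerset.filter (fun σ => V \ σ ∉ K)

/-- Alexander dual of `K` relative to its own vertex set. -/
def dualSelf (K : Cx) : Cx := dual K (verts K)

/-- Iterated Alexander dual, each dual taken relative to the current vertex set. -/
def iterDual : ℕ → Cx → Cx
  | 0, K => K
  | m + 1, K => dualSelf (iterDual m K)

/-- Join of two complexes (on disjoint vertex sets). -/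
def join (K L : Cx) : Cx := (K ×ˢ L).image fun p => p.1 ∪ p.2

/-- Link of a face `σ` in `K`. -/
def link (σ : Finset ℕ) (K : Cx) : Cx :=
  K.filter fun τ => τ ∩ σ = ∅ ∧ τ ∪ σ ∈ K

/-- Star of a face `σ` in `K`. -/
def star (σ : Finset ℕ) (K : Cx) : Cx := K.filter fun τ => τ ∪ σ ∈ K

/-- Deletion of a vertex. -/
def del (v : ℕ) (K : Cx) : Cx := K.filter fun σ => v ∉ σ

/-- The facets (maximal = principal faces) of `K`. -/
def facets (K : Cx) : Cx := K.filter fun σ => ∀ τ ∈ K, σ ⊆ τ → σ = τ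

/-- Number of principal simplices. -/
def mCount (K : Cx) : ℕ := (facets K).card

/-- `K.sup card`, i.e. `dim K + 1`. -/
def topCard (K : Cx) : ℕ := K.sup Finset.card

/-- Dimension of a complex, as an integer (so that `dim {∅} = -1`). -/
def dimC (K : Cx) : ℤ := (topCard K : ℤ) - 1

/-- `L` is a top generated subcomplex of `K`. -/
def topGen (L K : Cx) : Prop := L ⊆ K ∧ facets L ⊆ facets K

/-- The boundary complex: generated by the ridges ((d-1)-faces) contained in
exactly one facet of top dimension. -/
def bd (K : Cx) : Cx :=
  (K.filter fun σ => σ.card + 1 = topCard K ∧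
    (K.filter fun τ => τ.card = topCard K ∧ σ ⊆ τ).card = 1).biUnion Finset.powerset

/-- Simplicial isomorphism of complexes. -/
def Iso (K L : Cx) : Prop :=
  ∃ f : ℕ → ℕ, Set.InjOn f ↑(verts K) ∧ K.image (Finset.image f) = L

/-- Elementary starring `(τ, a) K`: remove the faces containing `τ` and replace
`st(τ,K) = τ * lk(τ,K)` by `a * ∂τ * lk(τ,K)`. -/
def starringOp (τ : Finset ℕ) (a : ℕ) (K : Cx) : Cx :=
  K.filter (fun σ => ¬ τ ⊆ σ) ∪
    join (simplexOn {a}) (join (boundaryOn τ) (link τ K))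

/-- One stellar subdivision step. -/
inductive SubdivStep : Cx → Cx → Prop where
  | mk (K : Cx) (τ : Finset ℕ) (a : ℕ) : τ ∈ K → τ ≠ ∅ → a ∉ verts K →
      SubdivStep K (starringOp τ a K)

/-- `Subdiv K K'` : `K'` is obtained from `K` by stellar subdivisions. -/
def Subdiv : Cx → Cx → Prop := Relation.ReflTransGen SubdivStep

/-- Stellar equivalence (by Alexander's theorem, this is PL-isomorphism):
the equivalence relation generated by stellar subdivisions and simplicial
isomorphisms. -/
def StellarEquiv : Cx → Cx → Prop :=
  Relation.EqvGen (fun K L => SubdivStep K L ∨ Iso K L)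

/-- A combinatorial `d`-ball: a complex PL-isomorphic to the `d`-simplex. -/
def CombBall (d : ℕ) (B : Cx) : Prop :=
  StellarEquiv B (simplexOn (Finset.range (d + 1)))

/-- A combinatorial `d`-sphere: a complex PL-isomorphic to `∂Δ^{d+1}`. -/
def CombSphere (d : ℕ) (S : Cx) : Prop :=
  StellarEquiv S (boundaryOn (Finset.range (d + 2)))

/-- An elementary collapse step through a free face. -/
def CollapseStep (K L : Cx) : Prop :=
  ∃ σ τ : Finset ℕ, σ ∈ K ∧ τ ∈ K ∧ σ ⊆ τ ∧ σ.card + 1 = τ.card ∧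
    (∀ ρ ∈ K, σ ⊆ ρ → ρ = σ ∨ ρ = τ) ∧ L = K \ {σ, τ}

/-- Simplicial collapse. -/
def CollapsesTo : Cx → Cx → Prop := Relation.ReflTransGen CollapseStep

/-- A complex is collapsible if it has a (stellar) subdivision which collapses
to a single vertex. -/
def Collapsible (K : Cx) : Prop :=
  ∃ K', Subdiv K K' ∧ ∃ v : ℕ, CollapsesTo K' ({∅, {v}} : Cx)

mutual
/-- Non-homogeneous manifold of dimension `d` (inductive definition via links:
every vertex link is an NH-ball or an NH-sphere of smaller dimension; the
`(-1)`-dimensional NH-sphere is the complex `{∅}`). -/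
def NHManifold : ℕ → Cx → Prop
  | 0 => fun K => IsComplex K ∧ K.Nonempty ∧ topCard K = 1
  | (d + 1) => fun K => IsComplex K ∧ topCard K = d + 2 ∧
      ∀ v ∈ verts K,
        link {v} K = ({∅} : Cx) ∨
        (∃ k, ∃ _ : k ≤ d, NHBall k (link {v} K)) ∨
        (∃ k, ∃ _ : k ≤ d, ∃ j, ∃ _ : j ≤ k, NHSphereH k j (link {v} K))
  termination_by d => 3 * d
  decreasing_by all_goals omega

/-- Non-homogeneous ball of dimension `d`: a collapsible NH-manifold. -/
def NHBall : ℕ → Cx → Prop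
  | 0 => fun K => ∃ v : ℕ, K = ({∅, {v}} : Cx)
  | (d + 1) => fun K => NHManifold (d + 1) K ∧ Collapsible K
  termination_by d => 3 * d + 1
  decreasing_by all_goals omega

/-- Non-homogeneous sphere of dimension `d` and homotopy dimension `k`:
an NH-manifold `S` admitting a decomposition `S = B + L` with `B` a top
generated NH-ball of dimension `d`, `L` a top generated combinatorial
`k`-ball and `B ∩ L = ∂L`. -/
def NHSphereH : ℕ → ℕ → Cx → Prop
  | d, k => fun S => NHManifold d S ∧ ∃ B L : Cx,
      NHBall d B ∧ topGen B S ∧ CombBall k L ∧ topGen L S ∧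
      B ∪ L = S ∧ B ∩ L = bd L
  termination_by d k => 3 * d + 2
  decreasing_by all_goals omega
end

/-- `S = B + L` is a decomposition of the `d`-dimensional NH-sphere `S` of
homotopy dimension `k`. -/
def SphereDecomp (d k : ℕ) (S B L : Cx) : Prop :=
  NHManifold d S ∧ NHBall d B ∧ topGen B S ∧ CombBall k L ∧ topGen L S ∧
    B ∪ L = S ∧ B ∩ L = bd L

/-- A minimal NH-sphere of dimension `d`: an NH-sphere whose number of maximal
faces equals its homotopy dimension plus `2`. -/
def MinNHSphereD (d : ℕ) (S : Cx) : Prop :=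
  ∃ k : ℕ, NHSphereH d k S ∧ mCount S = k + 2

/-- A minimal NH-sphere (of any dimension, including the `(-1)`-sphere `{∅}`). -/
def MinNHSphere (S : Cx) : Prop :=
  S = ({∅} : Cx) ∨ ∃ d : ℕ, MinNHSphereD d S

/-- A minimal NH-ball of dimension `d`: an NH-ball `B` taking part in a
decomposition `S = B + L` of a minimal NH-sphere. -/
def MinNHBall (d : ℕ) (B : Cx) : Prop :=
  ∃ (k : ℕ) (S L : Cx), SphereDecomp d k S B L ∧ mCount S = k + 2

/-- The geometric realization of a complex, inside `ℝ^ℕ`: convex combinations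
supported on a face. -/
def realization (K : Cx) : Set (ℕ → ℝ) :=
  {f | ∃ σ ∈ K, (∀ i, i ∉ σ → f i = 0) ∧ (∀ i, 0 ≤ f i) ∧ ∑ i ∈ σ, f i = 1}

/-
Let `n` be the number of facets of `K`. If all facets have a common vertex, `K` is a cone and so
contractible. Otherwise every set of facets with a common vertex is proper, so the nerve, and with
it `K`, is dominated by the boundary of a simplex with `n` vertices, which lies in finitely many
affine subspaces of dimension `n - 2`. If `n ≤ k + 1`, a `C¹` approximation of a map from there to
`S^k` avoids a direction, because the cone over its image has Hausdorff dimension at most `n - 1`;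
hence the map is nullhomotopic. So would be the identity of `S^k`, factored up to homotopy
through `K`, and then the ball of radius 2 would have a `C¹` retraction `G` onto its boundary.
This is impossible by the Milnor–Rogers argument: `∫ det (1 + t • (DG - 1))` is a polynomial in `t`
equal to the volume of the ball for small `t`, hence also for `t = 1`, where the integrand vanishes.
-/

open Set Metric MeasureTheory Polynomial Module Topology
open scoped NNReal Finset

theorem exists_eval_eq_det_one_add_smul {R M : Type*} [CommRing R] [AddCommGroup M] [Module R M]
    [Module.Free R M] [Module.Finite R M] [Nontrivial R] (f : M →ₗ[R] M) :
    ∃ q : R[X], q.natDegree ≤ finrank R M ∧ ∀ t, q.eval t = LinearMap.det (1 + t • f) := by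
  classical
  set b := finBasis R M
  set A := LinearMap.toMatrix b b f
  refine ⟨((X : R[X]) • A.map C + (1 : Matrix _ _ R).map C).det, ?_, fun t ↦ ?_⟩
  · simpa using natDegree_det_X_add_C_le A 1
  · have : LinearMap.toMatrix b b (1 + t • f) = 1 + t • A := by
      rw [map_add, map_smul, LinearMap.toMatrix_one]
    rw [← LinearMap.det_toMatrix b, this, ← coe_evalRingHom, RingHom.map_det]
    congr 1
    ext i j
    simp [Matrix.one_apply, apply_ite, add_comm, mul_comm t]

theorem exists_eval_eq_integral_det_one_add_smul {α E : Type*} [MeasurableSpace α]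
    {μ : Measure α} [NormedAddCommGroup E] [NormedSpace ℝ E] [FiniteDimensional ℝ E]
    {A : α → E →L[ℝ] E} (hA : ∀ t : ℝ, Integrable (fun x ↦ (1 + t • A x).det) μ) :
    ∃ p : ℝ[X], ∀ t, p.eval t = ∫ x, (1 + t • A x).det ∂μ := by
  set s := Finset.range (finrank ℝ E + 1)
  have hs : InjOn ((↑) : ℕ → ℝ) s := Nat.cast_injective.injOn
  refine ⟨Lagrange.interpolate s (↑) fun i ↦ ∫ x, (1 + (i : ℝ) • A x).det ∂μ, fun t ↦ ?_⟩
  have hdet : ∀ x, (1 + t • A x).det =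
      ∑ i ∈ s, (1 + (i : ℝ) • A x).det * (Lagrange.basis s (↑) i).eval t := fun x ↦ by
    obtain ⟨q, hq, hqt⟩ := exists_eval_eq_det_one_add_smul (A x : E →ₗ[ℝ] E)
    have := Lagrange.eq_interpolate hs <| degree_le_natDegree.trans_lt <|
      Nat.cast_lt.2 (show q.natDegree < s.card by simpa [s] using Nat.lt_succ_of_le hq)
    have := congrArg (eval t) this
    simpa [ContinuousLinearMap.det, Lagrange.interpolate_apply, eval_finsetSum, hqt] using this
  simp only [hdet, Lagrange.interpolate_apply, eval_finsetSum, eval_mul, eval_C]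
  rw [integral_finsetSum _ fun (i : ℕ) _ ↦ (hA i).mul_const _]
  simp only [integral_mul_const]

theorem lipschitzWith_indicator {E F : Type*} [NormedAddCommGroup E] [NormedSpace ℝ E]
    [FiniteDimensional ℝ E] [NormedAddCommGroup F] {K : ℝ≥0} {s : Set E} {v : E → F}
    (hv : LipschitzOnWith K v (closure s)) (h0 : EqOn v 0 (frontier s)) :
    LipschitzWith K (s.indicator v) := by
  have key : ∀ x ∈ s, ∀ y ∉ s, dist (v x) 0 ≤ K * dist x y := fun x hx y hy ↦ by
    obtain ⟨z, hz, hxz⟩ := exists_mem_frontier_infDist_compl_eq_dist hx fun h ↦ hy (h ▸ mem_univ y)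
    calc dist (v x) 0 = dist (v x) (v z) := by rw [h0 hz, Pi.zero_apply]
      _ ≤ K * dist x z := hv.dist_le_mul _ (subset_closure hx) _ (frontier_subset_closure hz)
      _ ≤ K * dist x y := by rw [← hxz]; gcongr; exact infDist_le_dist_of_mem hy
  refine LipschitzWith.of_dist_le_mul fun x y ↦ ?_
  by_cases hx : x ∈ s <;> by_cases hy : y ∈ s
  · simpa [hx, hy] using hv.dist_le_mul _ (subset_closure hx) _ (subset_closure hy)
  · simpa [hx, hy] using key x hx y hy
  · simpa [hx, hy, dist_comm] using key y hy x hx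
  · simpa [hx, hy] using by positivity

theorem bijective_add_of_lipschitzWith {E : Type*} [NormedAddCommGroup E] [CompleteSpace E]
    {K : ℝ≥0} {u : E → E} (hu : LipschitzWith K u) (hK : K < 1) :
    Function.Bijective fun x ↦ x + u x := by
  rw [Function.bijective_iff_existsUnique]
  intro y
  have hc : ContractingWith K fun x ↦ y - u x :=
    ⟨hK, by simpa using (LipschitzWith.const y).sub hu⟩
  refine ⟨hc.fixedPoint, ?_, fun x hx ↦ hc.fixedPoint_unique ?_⟩
  · exact eq_sub_iff_add_eq.1 hc.fixedPoint_isFixedPt.symm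
  · exact (eq_sub_iff_add_eq.2 hx).symm

theorem image_eq_of_bijective_of_eqOn_compl {α : Type*} {f : α → α} (hf : Function.Bijective f)
    {s : Set α} (h : EqOn f id sᶜ) : f '' s = s := by
  rw [← compl_inj_iff, ← image_compl_eq hf, h.image_eq, image_id]

theorem det_one_add_pos {E : Type*} [NormedAddCommGroup E] [NormedSpace ℝ E]
    [FiniteDimensional ℝ E] {A : E →L[ℝ] E} (hA : ‖A‖ < 1) : 0 < (1 + A).det := by
  have hne : ∀ B ∈ ball (0 : E →L[ℝ] E) 1, (1 + B).det ≠ 0 := fun B hB ↦ by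
    have : CompleteSpace E := FiniteDimensional.complete ℝ E
    have := isUnit_one_sub_of_norm_lt_one (x := -B) (by simpa using hB)
    rw [sub_neg_eq_add] at this
    exact ((this.map ContinuousLinearMap.toLinearMapRingHom).map LinearMap.det).ne_zero
  have hcont : Continuous fun B : E →L[ℝ] E ↦ (1 + B).det :=
    ContinuousLinearMap.continuous_det.comp (by fun_prop)
  by_contra! h
  obtain ⟨B, hB, h0⟩ := (convex_ball (0 : E →L[ℝ] E) 1).isPreconnected.intermediate_value
    (mem_ball_zero_iff.2 hA) (mem_ball_self one_pos) hcont.continuousOn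
    ⟨h, by simp [ContinuousLinearMap.det]⟩
  exact hne B hB h0

section Jacobian

variable {E : Type*} [NormedAddCommGroup E] [NormedSpace ℝ E] [FiniteDimensional ℝ E]

theorem bijOn_add_of_lipschitzOnWith {U : Set E} {v : E → E} {K : ℝ≥0} (hK : K < 1)
    (hv : LipschitzOnWith K v (closure U)) (h0 : EqOn v 0 (frontier U)) :
    BijOn (fun x ↦ x + v x) U U := by
  have : CompleteSpace E := FiniteDimensional.complete ℝ E
  have hbij := bijective_add_of_lipschitzWith (lipschitzWith_indicator hv h0) hK
  have heq : EqOn (fun x ↦ x + U.indicator v x) (fun x ↦ x + v x) U := fun x hx ↦ by simp [hx]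
  have himg := image_eq_of_bijective_of_eqOn_compl (s := U) hbij fun x hx ↦ by
    simp [notMem_of_mem_compl hx]
  simpa only [himg] using (hbij.injective.injOn.bijOn_image (s := U)).congr heq

variable [MeasurableSpace E] [BorelSpace E] (μ : Measure E) [μ.IsAddHaarMeasure]

theorem setIntegral_det_one_add_fderiv_of_lipschitzOnWith {U : Set E} {v : E → E} {K : ℝ≥0}
    (hK : K < 1) (hU : IsOpen U) (hd : Differentiable ℝ v) (hv : LipschitzOnWith K v (closure U))
    (h0 : EqOn v 0 (frontier U)) : ∫ x in U, (1 + fderiv ℝ v x).det ∂μ = μ.real U := by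
  have hbij := bijOn_add_of_lipschitzOnWith hK hv h0
  have hderiv : ∀ x ∈ U, HasFDerivWithinAt (fun x ↦ x + v x) (1 + fderiv ℝ v x) U x := fun x _ ↦
    ((hasFDerivAt_id (𝕜 := ℝ) x).add (hd x).hasFDerivAt).hasFDerivWithinAt
  have hpos : ∀ x ∈ U, 0 < (1 + fderiv ℝ v x).det := fun x hx ↦ det_one_add_pos <|
    (norm_fderiv_le_of_lipschitzOn ℝ (hU.mem_nhds hx) (hv.mono subset_closure)).trans_lt hK
  calc ∫ x in U, (1 + fderiv ℝ v x).det ∂μ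
    _ = ∫ x in U, |(1 + fderiv ℝ v x).det| • (1 : ℝ) ∂μ :=
        setIntegral_congr_fun hU.measurableSet fun x hx ↦ by
          simp only [smul_eq_mul, mul_one, abs_of_pos (hpos x hx)]
    _ = ∫ x in (fun x ↦ x + v x) '' U, 1 ∂μ :=
        (integral_image_eq_integral_abs_det_fderiv_smul μ hU.measurableSet hderiv hbij.injOn
          fun _ ↦ 1).symm
    _ = μ.real U := by simp [hbij.image_eq]

theorem setIntegral_det_fderiv_of_eqOn_frontier_id {U : Set E} {G : E → E} (hU : IsOpen U)
    (hb : Bornology.IsBounded U) (hG : ContDiff ℝ 1 G) (hid : EqOn G id (frontier U)) :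
    ∫ x in U, (fderiv ℝ G x).det ∂μ = μ.real U := by
  have := FiniteDimensional.proper ℝ E
  set v : E → E := G - id
  have hv : ContDiff ℝ 1 v := hG.sub contDiff_id
  have hd : Differentiable ℝ v := hv.differentiable one_ne_zero
  have hint (t : ℝ) : IntegrableOn (fun x ↦ (1 + t • fderiv ℝ v x).det) U μ :=
    ContinuousLinearMap.continuous_det.comp (by fun_prop) |>.continuousOn
      |>.integrableOn_compact hb.isCompact_closure |>.mono_set subset_closure
  obtain ⟨p, hp⟩ := exists_eval_eq_integral_det_one_add_smul hint
  obtain ⟨K, hK⟩ : ∃ K, LipschitzOnWith K v (closure U) :=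
    hv.locallyLipschitz.locallyLipschitzOn.exists_lipschitzOnWith_of_compact hb.isCompact_closure
  have hsmall : ∀ t ∈ Ico (0 : ℝ≥0) (K + 1)⁻¹, p.eval (t : ℝ) = μ.real U := fun t ht ↦ by
    have htK : t * K < 1 := calc
      t * K ≤ t * (K + 1) := by gcongr; simp
      _ < 1 := by simpa using ht.2
    rw [hp, ← setIntegral_det_one_add_fderiv_of_lipschitzOnWith μ htK hU (hd.const_smul (t : ℝ))
      (by simpa using! (lipschitzWith_smul (t : ℝ)).comp_lipschitzOnWith hK)
      fun x hx ↦ by simp [v, hid hx]]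
    simp only [fderiv_const_smul (hd _)]
  have hpos : 0 < (K + 1)⁻¹ := by positivity
  have hconst : p = C (μ.real U) := eq_of_infinite_eval_eq _ _ <|
    ((Ico_infinite hpos).image NNReal.coe_injective.injOn).mono <| by
      rintro _ ⟨t, ht, rfl⟩
      simpa using hsmall t ht
  have hfderiv (x : E) : 1 + fderiv ℝ v x = fderiv ℝ G x := by
    rw [fderiv_sub (hG.differentiable one_ne_zero x) differentiableAt_id, fderiv_id]
    exact add_sub_cancel _ _
  simpa [hconst, hfderiv, eq_comm] using hp 1

end Jacobian

section NoRetraction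

variable {E : Type*} [NormedAddCommGroup E] [InnerProductSpace ℝ E] [FiniteDimensional ℝ E]

theorem det_fderiv_eq_zero_of_norm_eq_const {G : E → E} {r : ℝ} {x : E} (hr : 0 < r)
    (hG : DifferentiableAt ℝ G x) (hnorm : ∀ y, ‖G y‖ = r) : (fderiv ℝ G x).det = 0 := by
  have horth (w : E) : inner ℝ (G x) (fderiv ℝ G x w) = 0 := by
    have hconst : HasFDerivAt (fun y ↦ ‖G y‖ ^ 2) (0 : E →L[ℝ] ℝ) x := by
      simpa only [hnorm] using hasFDerivAt_const _ _
    simpa using congr($(hG.hasFDerivAt.norm_sq.unique hconst) w)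
  by_contra hdet
  obtain ⟨w, hw⟩ : ∃ w, fderiv ℝ G x w = G x :=
    (LinearMap.equivOfDetNeZero _ hdet).surjective (G x)
  have hzero : G x = 0 := inner_self_eq_zero.1 (hw ▸ horth w)
  exact hr.ne (by rw [← hnorm x, hzero, norm_zero])

theorem not_eqOn_sphere_id_of_norm_eq_const {G : E → E} {r : ℝ} (hr : 0 < r)
    (hG : ContDiff ℝ 1 G) (hnorm : ∀ x, ‖G x‖ = r) : ¬ EqOn G id (sphere 0 r) := fun hid ↦ by
  borelize E
  have hvol := setIntegral_det_fderiv_of_eqOn_frontier_id Measure.addHaar isOpen_ball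
    (isBounded_ball (x := (0 : E))) hG (by rwa [frontier_ball _ hr.ne'])
  have hdet (x : E) : (fderiv ℝ G x).det = 0 :=
    det_fderiv_eq_zero_of_norm_eq_const hr (hG.differentiable one_ne_zero x) hnorm
  have hpos : 0 < Measure.addHaar.real (ball (0 : E) r) :=
    ENNReal.toReal_pos (measure_ball_pos _ _ hr).ne' measure_ball_lt_top.ne
  simp only [hdet, integral_zero] at hvol
  exact hpos.ne hvol

end NoRetraction

section Sphere

variable {E : Type*} [NormedAddCommGroup E] [NormedSpace ℝ E]

theorem nnnorm_smul_sphere (t : ℝ≥0) (s : sphere (0 : E) 1) : ‖t • (s : E)‖₊ = t :=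
  NNReal.eq (by simp [NNReal.smul_def, norm_smul])

variable [ProperSpace E] [Nontrivial E]

theorem isQuotientMap_smul_sphere :
    IsQuotientMap fun p : ℝ≥0 × sphere (0 : E) 1 ↦ p.1 • (p.2 : E) := by
  have hcont : Continuous fun p : ℝ≥0 × sphere (0 : E) 1 ↦ p.1 • (p.2 : E) := by fun_prop
  have hproper : IsProperMap fun p : ℝ≥0 × sphere (0 : E) 1 ↦ p.1 • (p.2 : E) := by
    refine isProperMap_of_comp_of_t2 hcont continuous_nnnorm ?_
    simpa only [Function.comp_def, nnnorm_smul_sphere] using isProperMap_fst_of_compactSpace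
  refine hproper.isClosedMap.isQuotientMap hcont fun x ↦ ?_
  obtain rfl | hx := eq_or_ne x 0
  · obtain ⟨s, hs⟩ := NormedSpace.sphere_nonempty (E := E) (x := 0).2 zero_le_one
    exact ⟨(0, ⟨s, hs⟩), zero_smul _ _⟩
  · exact ⟨(‖x‖₊, ⟨‖x‖⁻¹ • x, by simp [norm_smul, hx]⟩), by simp [NNReal.smul_def, hx]⟩

theorem exists_extension_of_nullhomotopic {Y : Type*} [TopologicalSpace Y]
    {f : C(sphere (0 : E) 1, Y)} (hf : f.Nullhomotopic) :
    ∃ F : C(E, Y), ∀ t : ℝ≥0, 1 ≤ t → ∀ s : sphere (0 : E) 1, F (t • (s : E)) = f s := by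
  obtain ⟨y, ⟨H⟩⟩ := hf.imp fun y hy ↦ hy.symm
  let h : C(ℝ≥0 × sphere (0 : E) 1, Y) := ⟨fun p ↦ H.extend p.1 p.2, by fun_prop⟩
  let q : C(ℝ≥0 × sphere (0 : E) 1, E) := ⟨_, isQuotientMap_smul_sphere.continuous⟩
  have hq : IsQuotientMap q := isQuotientMap_smul_sphere
  have hfac : Function.FactorsThrough h q := by
    rintro ⟨t, s⟩ ⟨t', s'⟩ (heq : t • (s : E) = t' • (s' : E))
    obtain rfl : t = t' := by simpa only [nnnorm_smul_sphere] using congrArg nnnorm heq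
    obtain rfl | ht := eq_or_ne t 0
    · simp [h]
    · rw [Subtype.ext (smul_right_injective E ht heq)]
  refine ⟨hq.lift h hfac, fun t ht s ↦ ?_⟩
  calc hq.lift h hfac (q (t, s)) = h (t, s) := congr($(hq.lift_comp h hfac) (t, s))
    _ = f s := by simp [h, H.extend_apply_of_one_le (NNReal.one_le_coe.2 ht)]

end Sphere

section SphereNotContractible

variable {E : Type*} [NormedAddCommGroup E] [InnerProductSpace ℝ E]

theorem contDiffAt_inv_norm_smul {n : WithTop ℕ∞} {x : E} (hx : x ≠ 0) :
    ContDiffAt ℝ n (fun y ↦ ‖y‖⁻¹ • y) x :=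
  ((contDiffAt_norm ℝ hx).inv (norm_ne_zero_iff.2 hx)).smul contDiffAt_id

variable [FiniteDimensional ℝ E]

theorem not_nullhomotopic_id_sphere : ¬ (ContinuousMap.id (sphere (0 : E) 1)).Nullhomotopic := by
  intro hnull
  have := FiniteDimensional.proper ℝ E
  have : Nontrivial E := ⟨hnull.choose, 0, ne_zero_of_mem_unit_sphere _⟩
  obtain ⟨F, hF⟩ := exists_extension_of_nullhomotopic hnull
  have hradial : ∀ x : E, 1 ≤ ‖x‖ → (F x : E) = ‖x‖⁻¹ • x := fun x hx ↦ by
    have hx0 : ‖x‖ ≠ 0 := (one_pos.trans_le hx).ne'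
    have := hF ‖x‖₊ hx ⟨‖x‖⁻¹ • x, by simp [norm_smul, hx0]⟩
    simpa [NNReal.smul_def, hx0] using congrArg Subtype.val this
  have hsmooth : ContDiffOn ℝ (1 : ℕ∞) (fun x ↦ (F x : E)) {x | 1 < ‖x‖} := fun x hx ↦
    (contDiffAt_inv_norm_smul (norm_pos_iff.1 (one_pos.trans hx))).contDiffWithinAt.congr
      (fun y hy ↦ hradial y hy.le) (hradial x hx.le)
  have hnhds : {x : E | 1 < ‖x‖} ∈ 𝓝ˢ {x : E | 2 ≤ ‖x‖} :=
    (isOpen_lt continuous_const continuous_norm).mem_nhdsSet.2 fun x (hx : 2 ≤ ‖x‖) ↦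
      show 1 < ‖x‖ from one_lt_two.trans_le hx
  obtain ⟨P, hP, hPF, hPeq, -⟩ :=
    (continuous_subtype_val.comp F.continuous).exists_contDiff_approx_and_eqOn 1
      continuous_const (fun _ ↦ one_pos) (isClosed_le continuous_const continuous_norm)
      hnhds hsmooth
  have hP0 (x : E) : P x ≠ 0 := fun hx ↦ by simpa [hx] using hPF x
  refine not_eqOn_sphere_id_of_norm_eq_const (G := fun x ↦ (2 : ℝ) • ‖P x‖⁻¹ • P x) two_pos
    (contDiff_iff_contDiffAt.2 fun x ↦ contDiffAt_const.smul <|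
      (contDiffAt_inv_norm_smul (hP0 x)).comp x hP.contDiffAt)
    (fun x ↦ by simp [norm_smul, hP0]) fun x hx ↦ ?_
  have hx2 : ‖x‖ = 2 := by simpa using hx
  have hPx : P x = ‖x‖⁻¹ • x := (hPeq hx2.ge).trans (hradial x (hx2 ▸ one_le_two))
  simp [hPx, hx2, norm_smul]

end SphereNotContractible

theorem homotopic_of_segment_subset {X V : Type*} [TopologicalSpace X] [AddCommGroup V]
    [TopologicalSpace V] [IsTopologicalAddGroup V] [Module ℝ V] [ContinuousSMul ℝ V] {s : Set V}
    {f g : C(X, s)} (h : ∀ x, segment ℝ (f x : V) (g x) ⊆ s) : f.Homotopic g := by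
  let H := ContinuousMap.Homotopy.affine (((ContinuousMap.id V).restrict s).comp f)
    (((ContinuousMap.id V).restrict s).comp g)
  refine ⟨⟨⟨fun p ↦ ⟨H p, h p.2 ?_⟩, by fun_prop⟩, fun x ↦ ?_, fun x ↦ ?_⟩⟩
  · rw [segment_eq_image_lineMap]
    exact ⟨p.1, p.1.2, rfl⟩
  · exact Subtype.ext (H.map_zero_left x)
  · exact Subtype.ext (H.map_one_left x)

section LowDimensional

variable {V F : Type*} [NormedAddCommGroup V] [NormedSpace ℝ V]
  [NormedAddCommGroup F] [NormedSpace ℝ F]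

theorem dimH_smul_image_affineSpan_le {P : V → F} (hP : ContDiff ℝ 1 P) (s : Finset V) :
    dimH ((fun p : ℝ × V ↦ p.1 • P p.2) '' univ ×ˢ affineSpan ℝ (s : Set V)) ≤ #s := by
  obtain rfl | ⟨a, ha⟩ := s.eq_empty_or_nonempty
  · simp
  set W := vectorSpan ℝ (s : Set V)
  have hW : finrank ℝ W + 1 ≤ #s := by
    have : Nonempty s := ⟨⟨a, ha⟩⟩
    have h := finrank_vectorSpan_range_add_one_le ℝ (Subtype.val : s → V)
    rwa [Subtype.range_coe_subtype, Fintype.card_coe] at h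
  have : FiniteDimensional ℝ W := finiteDimensional_vectorSpan_of_finite ℝ s.finite_toSet
  let φ : ℝ × W → F := fun p ↦ p.1 • P (p.2 + a)
  have hφ : ContDiff ℝ 1 φ :=
    contDiff_fst.smul (hP.comp ((W.subtypeL.contDiff.comp contDiff_snd).add contDiff_const))
  have hsub : (fun p : ℝ × V ↦ p.1 • P p.2) '' univ ×ˢ affineSpan ℝ (s : Set V) ⊆ range φ := by
    rintro _ ⟨⟨t, y⟩, ⟨-, hy⟩, rfl⟩
    have hya : y - a ∈ W := (direction_affineSpan ℝ (s : Set V)).le <|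
      AffineSubspace.vsub_mem_direction hy (subset_affineSpan ℝ _ ha)
    exact ⟨(t, ⟨y - a, hya⟩), by simp [φ]⟩
  calc _ ≤ dimH (range φ) := dimH_mono hsub
    _ ≤ finrank ℝ (ℝ × W) := hφ.dimH_range_le
    _ ≤ #s := by rw [finrank_prod, finrank_self, add_comm]; exact_mod_cast hW

theorem exists_ne_zero_forall_zero_notMem_segment [FiniteDimensional ℝ F] [Nontrivial F]
    {ι : Type*} [Countable ι] {P : V → F} (hP : ContDiff ℝ 1 P) {s : ι → Finset V}
    (hs : ∀ i, #(s i) < finrank ℝ F) :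
    ∃ v ≠ 0, ∀ i, ∀ y ∈ affineSpan ℝ (s i : Set V), P y ≠ 0 → 0 ∉ segment ℝ (P y) v := by
  have hdim : dimH (⋃ i, (fun p : ℝ × V ↦ p.1 • P p.2) '' univ ×ˢ affineSpan ℝ (s i : Set V)) <
      finrank ℝ F := calc
    _ ≤ ((finrank ℝ F - 1 : ℕ) : ENNReal) := by
      rw [dimH_iUnion]
      exact iSup_le fun i ↦ (dimH_smul_image_affineSpan_le hP (s i)).trans
        (mod_cast Nat.le_sub_one_of_lt (hs i))
    _ < finrank ℝ F := mod_cast Nat.sub_one_lt finrank_pos.ne'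
  obtain ⟨v, hv, hv0⟩ := (dense_compl_of_dimH_lt_finrank hdim).exists_mem_open
    (isOpen_compl_singleton (x := (0 : F))) (exists_ne 0)
  refine ⟨v, hv0, fun i y hy hPy ↦ ?_⟩
  rintro ⟨a, b, -, -, hab, h0⟩
  obtain rfl | hb := eq_or_ne b 0
  · simp_all
  refine hv (mem_iUnion.2 ⟨i, (-(b⁻¹ * a), y), ⟨mem_univ _, hy⟩, ?_⟩)
  change -(b⁻¹ * a) • P y = v
  rw [neg_smul, mul_smul, eq_neg_of_add_eq_zero_left h0, smul_neg, neg_neg, inv_smul_smul₀ hb]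

theorem nullhomotopic_of_val_eq {X : Type*} [TopologicalSpace X] {f : C(X, sphere (0 : F) 1)}
    {g : C(X, ({0}ᶜ : Set F))} (hg : g.Nullhomotopic) (hfg : ∀ x, (g x : F) = f x) :
    f.Nullhomotopic := by
  let ρ : C(({0}ᶜ : Set F), sphere (0 : F) 1) :=
    ContinuousMap.fst.comp (homeomorphUnitSphereProd F : C(({0}ᶜ : Set F), _ × Ioi (0 : ℝ)))
  have hρ : ρ.comp g = f := by
    ext x
    simp [ρ, hfg]
  exact hρ ▸ hg.comp_right ρ

theorem nullhomotopic_of_subset_iUnion_affineSpan [FiniteDimensional ℝ V]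
    [FiniteDimensional ℝ F] [Nontrivial F] {ι : Type*} [Countable ι] {Q : Set V}
    (hQ : IsClosed Q) {s : ι → Finset V}
    (hs : ∀ i, #(s i) < finrank ℝ F) (hQs : Q ⊆ ⋃ i, affineSpan ℝ (s i : Set V))
    (g : C(Q, sphere (0 : F) 1)) : g.Nullhomotopic := by
  obtain ⟨g', hg'⟩ := (((ContinuousMap.id F).restrict (sphere 0 1)).comp g).exists_restrict_eq hQ
  obtain ⟨P, hP, hPg, -⟩ := g'.continuous.exists_contDiff_approx 1 continuous_const fun _ ↦ one_pos
  have hball (y : Q) : ball (g y : F) 1 ⊆ {0}ᶜ := fun x hx hx0 ↦ by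
    have : dist x (g y : F) = 1 := by rw [mem_singleton_iff.1 hx0]; simp
    exact (mem_ball.1 hx).ne this
  have hPball (y : Q) : P y ∈ ball (g y : F) 1 := by
    have : g' y = g y := congr($hg' y)
    exact this ▸ hPg y
  obtain ⟨v, hv0, hv⟩ := exists_ne_zero_forall_zero_notMem_segment hP hs
  let g₀ : C(Q, ({0}ᶜ : Set F)) := ⟨fun y ↦ ⟨g y, hball y (mem_ball_self one_pos)⟩, by fun_prop⟩
  let P₀ : C(Q, ({0}ᶜ : Set F)) :=
    ⟨fun y ↦ ⟨P y, hball y (hPball y)⟩, by have := hP.continuous; fun_prop⟩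
  have hgP : g₀.Homotopic P₀ := homotopic_of_segment_subset fun y ↦
    ((convex_ball _ _).segment_subset (mem_ball_self one_pos) (hPball y)).trans (hball y)
  have hPv : P₀.Homotopic (.const Q ⟨v, hv0⟩) := homotopic_of_segment_subset fun y x hx h0 ↦ by
    obtain ⟨i, hi⟩ := mem_iUnion.1 (hQs y.2)
    exact hv i y hi (P₀ y).2 (h0 ▸ hx)
  exact nullhomotopic_of_val_eq ⟨_, hgP.trans hPv⟩ fun _ ↦ rfl

end LowDimensional

theorem convexHull_image_single {α : Type*} [DecidableEq α] (σ : Finset α) :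
    convexHull ℝ ((fun i ↦ Pi.single i (1 : ℝ)) '' (σ : Set α)) =
      {f : α → ℝ | (∀ i, i ∉ σ → f i = 0) ∧ (∀ i, 0 ≤ f i) ∧ ∑ i ∈ σ, f i = 1} := by
  apply Subset.antisymm
  · refine convexHull_min ?_ ?_
    · rintro _ ⟨i, hi, rfl⟩
      refine ⟨fun j hj ↦ Pi.single_eq_of_ne (ne_of_mem_of_not_mem hi hj).symm _,
        Pi.single_nonneg (α := fun _ ↦ ℝ).2 zero_le_one, ?_⟩
      simpa using hi
    · rintro f ⟨hf0, hf, hf1⟩ g ⟨hg0, hg, hg1⟩ a b ha hb hab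
      refine ⟨fun i hi ↦ ?_, fun i ↦ ?_, ?_⟩
      · simp [hf0 i hi, hg0 i hi]
      · exact add_nonneg (mul_nonneg ha (hf i)) (mul_nonneg hb (hg i))
      · simp [Finset.sum_add_distrib, ← Finset.mul_sum, hf1, hg1, hab]
  · rintro f ⟨hf0, hf, hf1⟩
    have hsum : f = ∑ i ∈ σ, f i • Pi.single i (1 : ℝ) := by
      ext j
      simpa [Finset.sum_apply, Pi.single_apply] using hf0 j
    rw [hsum]
    exact (convex_convexHull ℝ _).sum_mem (fun i _ ↦ hf i) hf1
      fun i hi ↦ subset_convexHull ℝ _ (mem_image_of_mem _ hi)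

section Nerve

/-- The nerve of a finite family of sets, encoded as the finset of all index sets of subfamilies
with a common point (including the empty subfamily). -/
noncomputable def nerve {ι α : Type*} [Fintype ι] (C : ι → Set α) : Finset (Finset ι) :=
  open Classical in {σ | (⋂ i ∈ σ, C i).Nonempty}

theorem mem_nerve {ι α : Type*} [Fintype ι] {C : ι → Set α} {σ : Finset ι} :
    σ ∈ nerve C ↔ ∃ x, ∀ i ∈ σ, x ∈ C i := by
  simp only [nerve, Finset.mem_filter_univ]
  simp only [Set.Nonempty, mem_iInter]

theorem sum_nerve_prod_compl_pos {ι α : Type*} [Fintype ι] [DecidableEq ι] {C : ι → Set α}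
    {y : ι → ℝ} (hy : 0 ≤ y) {x : α} (hx : ∀ i, y i = 0 ↔ x ∈ C i) :
    0 < ∑ σ ∈ nerve C, ∏ i ∈ σᶜ, y i := by
  refine Finset.sum_pos' (fun σ _ ↦ Finset.prod_nonneg fun i _ ↦ hy i)
    ⟨({i | y i = 0} : Finset ι), mem_nerve.2 ⟨x, by simp [hx]⟩, ?_⟩
  exact Finset.prod_pos fun i hi ↦ (hy i).lt_of_ne' (by simpa using hi)

variable {ι V : Type*} [AddCommGroup V] [Module ℝ V] [TopologicalSpace V] {C : ι → Set V}

theorem exists_continuousOn_forall_mem_of_eq_zero [Finite ι] [ContinuousAdd V]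
    [ContinuousSMul ℝ V] (hC : ∀ i, Convex ℝ (C i)) :
    ∃ b : (ι → ℝ) → V, ContinuousOn b {y | 0 ≤ y ∧ ∃ x, ∀ i, y i = 0 ↔ x ∈ C i} ∧
      ∀ y, 0 ≤ y → (∃ x, ∀ i, y i = 0 ↔ x ∈ C i) → ∀ i, y i = 0 → b y ∈ C i := by
  classical
  have := Fintype.ofFinite ι
  choose! c hc using fun (σ : Finset ι) (hσ : σ ∈ nerve C) ↦ mem_nerve.1 hσ
  -- The weight of `c σ` vanishes at `y` unless `σ` contains every `i` with `y i = 0`.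
  refine ⟨fun y ↦ (nerve C).centerMass (fun σ ↦ ∏ i ∈ σᶜ, y i) c, ?_, ?_⟩
  · refine (ContinuousOn.inv₀ (by fun_prop) ?_).smul (by fun_prop)
    rintro y ⟨hy, x, hx⟩
    exact (sum_nerve_prod_compl_pos hy hx).ne'
  · rintro y hy ⟨x, hx⟩ i hi
    beta_reduce
    rw [← Finset.centerMass_filter_ne_zero]
    refine (hC i).centerMass_mem (fun σ _ ↦ Finset.prod_nonneg fun i _ ↦ hy i) ?_ fun σ hσ ↦ ?_
    · rw [Finset.sum_filter_ne_zero]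
      exact sum_nerve_prod_compl_pos hy hx
    · obtain ⟨hσ, hσ0⟩ := Finset.mem_filter.1 hσ
      refine hc σ hσ i ?_
      by_contra hiσ
      exact hσ0 (Finset.prod_eq_zero (Finset.mem_compl.2 hiσ) hi)

variable [Fintype ι]

theorem exists_continuousMap_mem_stdSimplex_eq_zero_iff {X : Type*} [TopologicalSpace X]
    [PerfectlyNormalSpace X] {C : ι → Set X} (hC : ∀ i, IsClosed (C i)) (hC' : ⋂ i, C i = ∅) :
    ∃ a : C(X, ι → ℝ), ∀ x, a x ∈ stdSimplex ℝ ι ∧ ∀ i, a x i = 0 ↔ x ∈ C i := by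
  choose d hdC hd using fun i ↦
    perfectlyNormalSpace_iff_forall_isClosed_preimage_zero.1 ‹_› (C i) (hC i)
  have hpos (x : X) : 0 < ∑ i, d i x := by
    obtain ⟨i, hi⟩ : ∃ i, x ∉ C i := by simpa using (hC' ▸ notMem_empty x : x ∉ ⋂ i, C i)
    refine Finset.sum_pos' (fun i _ ↦ (hd i x).1) ⟨i, Finset.mem_univ i, (hd i x).1.lt_of_ne' ?_⟩
    simpa [hdC] using hi
  refine ⟨⟨fun x i ↦ d i x / ∑ j, d j x, ?_⟩, fun x ↦ ⟨⟨fun i ↦ ?_, ?_⟩, fun i ↦ ?_⟩⟩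
  · exact continuous_pi fun i ↦ (d i).continuous.div (by fun_prop) fun x ↦ (hpos x).ne'
  · exact div_nonneg (hd i x).1 (hpos x).le
  · simp [← Finset.sum_div, (hpos x).ne']
  · simp [hdC, (hpos x).ne']

variable [IsTopologicalAddGroup V] [ContinuousSMul ℝ V] [T6Space V]

theorem exists_homotopic_id_of_iInter_eq_empty (hC : ∀ i, IsCompact (C i))
    (hconv : ∀ i, Convex ℝ (C i)) (hC' : ⋂ i, C i = ∅) :
    ∃ Q : Set (ι → ℝ), IsCompact Q ∧ Q ⊆ {y ∈ stdSimplex ℝ ι | ∃ i, y i = 0} ∧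
      ∃ (a : C(⋃ i, C i, Q)) (b : C(Q, ⋃ i, C i)), (b.comp a).Homotopic (.id _) := by
  obtain ⟨a, ha⟩ := exists_continuousMap_mem_stdSimplex_eq_zero_iff (fun i ↦ (hC i).isClosed) hC'
  obtain ⟨b, hbcont, hb⟩ := exists_continuousOn_forall_mem_of_eq_zero hconv
  have hD (x : V) : 0 ≤ a x ∧ ∃ x', ∀ i, a x i = 0 ↔ x' ∈ C i := ⟨(ha x).1.1, x, (ha x).2⟩
  have hab {x : V} {i : ι} (hx : x ∈ C i) : b (a x) ∈ C i :=
    hb _ (hD x).1 (hD x).2 i (((ha x).2 i).2 hx)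
  have hbQ : MapsTo b (a '' ⋃ i, C i) (⋃ i, C i) := by
    rintro _ ⟨x, hx, rfl⟩
    obtain ⟨i, hi⟩ := mem_iUnion.1 hx
    exact mem_iUnion_of_mem i (hab hi)
  refine ⟨a '' ⋃ i, C i, (isCompact_iUnion hC).image a.continuous, ?_,
    ⟨_, a.continuous.continuousOn.mapsToRestrict (mapsTo_image a _)⟩,
    ⟨_, (hbcont.mono ?_).mapsToRestrict hbQ⟩, homotopic_of_segment_subset fun ⟨x, hx⟩ ↦ ?_⟩
  · rintro _ ⟨x, hx, rfl⟩
    obtain ⟨i, hi⟩ := mem_iUnion.1 hx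
    exact ⟨(ha x).1, i, ((ha x).2 i).2 hi⟩
  · rintro _ ⟨x, -, rfl⟩
    exact hD x
  · obtain ⟨i, hi⟩ := mem_iUnion.1 hx
    exact ((hconv i).segment_subset (hab hi) hi).trans (subset_iUnion C i)

variable {F : Type*} [NormedAddCommGroup F] [NormedSpace ℝ F] [FiniteDimensional ℝ F]
  [Nontrivial F]

theorem nullhomotopic_of_subset_boundary_stdSimplex (hcard : Fintype.card ι ≤ finrank ℝ F)
    {Q : Set (ι → ℝ)} (hQ : IsClosed Q) (hQs : Q ⊆ {y ∈ stdSimplex ℝ ι | ∃ i, y i = 0})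
    (g : C(Q, sphere (0 : F) 1)) : g.Nullhomotopic := by
  classical
  refine nullhomotopic_of_subset_iUnion_affineSpan hQ
    (s := fun i ↦ (Finset.univ.erase i).image fun j ↦ Pi.single j (1 : ℝ)) (fun i ↦ ?_) ?_ g
  · calc _ ≤ #(Finset.univ.erase i) := Finset.card_image_le
      _ < Fintype.card ι := Finset.card_erase_lt_of_mem (Finset.mem_univ i)
      _ ≤ finrank ℝ F := hcard
  · intro y hy
    obtain ⟨⟨hy0, hy1⟩, i, hi⟩ := hQs hy
    refine mem_iUnion_of_mem i (convexHull_subset_affineSpan _ ?_)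
    rw [Finset.coe_image, convexHull_image_single]
    refine ⟨fun j hj ↦ ?_, hy0, ?_⟩
    · obtain rfl : j = i := by simpa using hj
      exact hi
    · rwa [Finset.sum_erase _ hi]

theorem nullhomotopic_of_card_le_finrank (hC : ∀ i, IsCompact (C i))
    (hconv : ∀ i, Convex ℝ (C i)) (hcard : Fintype.card ι ≤ finrank ℝ F)
    (f : C(⋃ i, C i, sphere (0 : F) 1)) : f.Nullhomotopic := by
  obtain hC' | ⟨z, hz⟩ := (⋂ i, C i).eq_empty_or_nonempty
  · obtain ⟨Q, hQ, hQs, a, b, hab⟩ := exists_homotopic_id_of_iInter_eq_empty hC hconv hC'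
    have hnull : ((f.comp b).comp a).Nullhomotopic :=
      (nullhomotopic_of_subset_boundary_stdSimplex hcard hQ.isClosed hQs _).comp_left a
    exact hnull.imp fun y hy ↦ (((ContinuousMap.Homotopic.refl f).comp hab).symm).trans hy
  · obtain hι | ⟨⟨i⟩⟩ := isEmpty_or_nonempty ι
    · obtain ⟨y, hy⟩ := NormedSpace.sphere_nonempty (E := F) (x := 0).2 zero_le_one
      have : IsEmpty (⋃ i, C i) := by simp
      obtain rfl : f = .const _ ⟨y, hy⟩ := ContinuousMap.ext isEmptyElim
      exact ContinuousMap.nullhomotopic_of_constant _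
    · have hstar : StarConvex ℝ z (⋃ i, C i) :=
        starConvex_iUnion fun i ↦ (hconv i).starConvex (mem_iInter.1 hz i)
      have := hstar.contractibleSpace ⟨z, mem_iUnion_of_mem i (mem_iInter.1 hz i)⟩
      exact (id_nullhomotopic _).comp_right f

theorem stmt6_general {E : Type*} [NormedAddCommGroup E] [InnerProductSpace ℝ E]
    [FiniteDimensional ℝ E] [Nontrivial E] (hC : ∀ i, IsCompact (C i))
    (hconv : ∀ i, Convex ℝ (C i)) (f : C(⋃ i, C i, sphere (0 : E) 1))
    (g : C(sphere (0 : E) 1, ⋃ i, C i)) (hfg : (f.comp g).Homotopic (.id _)) :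
    finrank ℝ E + 1 ≤ Fintype.card ι := by
  by_contra! hcard
  have hf : f.Nullhomotopic :=
    nullhomotopic_of_card_le_finrank hC hconv (Nat.lt_succ_iff.1 hcard) f
  exact not_nullhomotopic_id_sphere ((hf.comp_left g).imp fun _ hy ↦ hfg.symm.trans hy)

end Nerve

theorem exists_subset_mem_facets {K : Cx} {σ : Finset ℕ} (hσ : σ ∈ K) : ∃ τ ∈ facets K, σ ⊆ τ := by
  obtain ⟨τ, hστ, hτ⟩ := K.exists_le_maximal hσ
  exact ⟨τ, Finset.mem_filter.2 ⟨hτ.1, fun _ hρ hτρ ↦ hτ.eq_of_le hρ hτρ⟩, hστ⟩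

theorem realization_eq_iUnion (K : Cx) :
    realization K = ⋃ σ ∈ K, convexHull ℝ ((fun i ↦ Pi.single i (1 : ℝ)) '' (σ : Set ℕ)) := by
  ext f
  simp only [realization, convexHull_image_single, mem_iUnion, mem_ofPred_eq, exists_prop]

theorem realization_eq_iUnion_facets (K : Cx) :
    realization K =
      ⋃ τ : facets K, convexHull ℝ ((fun i ↦ Pi.single i (1 : ℝ)) '' (τ : Set ℕ)) := by
  rw [realization_eq_iUnion]
  refine Subset.antisymm (iUnion₂_subset fun σ hσ ↦ ?_) (iUnion_subset fun τ ↦ ?_)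
  · obtain ⟨τ, hτ, hστ⟩ := exists_subset_mem_facets hσ
    exact subset_iUnion_of_subset ⟨τ, hτ⟩ (convexHull_mono (image_mono (mod_cast hστ)))
  · exact subset_iUnion₂_of_subset τ.1 (Finset.mem_filter.1 τ.2).1 Subset.rfl

/-- a finite simplicial complex homotopy equivalent to a
`k`-dimensional sphere has at least `k+2` maximal faces. -/
theorem stmt6 (K : Cx) (k : ℕ) (hK : IsComplex K)
    (h : Nonempty (ContinuousMap.HomotopyEquiv (realization K)
      (Metric.sphere (0 : EuclideanSpace ℝ (Fin (k + 1))) 1))) :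
    k + 2 ≤ mCount K := by
  obtain ⟨e⟩ := h
  rw [realization_eq_iUnion_facets] at e
  have hcard := stmt6_general (fun τ ↦ (τ.1.finite_toSet.image _).isCompact_convexHull ℝ)
    (fun τ ↦ convex_convexHull ℝ _) e.toFun e.invFun e.right_inv
  rwa [finrank_euclideanSpace_fin, Fintype.card_coe] at hcard
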